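/- In the setting below, for all t ∈ [0,T]: sup_{x∈ℝ} |φ(t,x)| ≤ sup_{x∈ℝ} |φ(0,x)| + c₂ · ∫₀^t sup_{x∈ℝ} |∂ₓ²U(τ,x)| dτ; in particular sup_{x∈ℝ} |φ(t,x)| ≤ sup_{x∈ℝ} |φ(0,x)| + 8·c₂·C_U for all t ∈ [0,T]. -/

import Mathlib

open MeasureTheory Filter Set intervalIntegral

/-- `L²` norm in the space variable. -/
noncomputable def L2norm (g : ℝ → ℝ) : ℝ := (∫ x : ℝ, (g x) ^ 2) ^ ((1 : ℝ) / 2)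

/-!
The proof is a maximum principle for the sup norm. At a point where `|φ(t,·)|` is maximal,
`∂ₓφ = 0` and `sign φ · ∂ₓ²φ ≤ 0`, so the equation, written in nondivergence form, gives
`sign φ · ∂ₜφ ≤ σ'(∂ₓU) |∂ₓ²U| - sign φ · (f'(U + φ) - f'(U)) ∂ₓU ≤ c₂ |∂ₓ²U|`:
the viscosity has the good sign and so has the flux, because `f` is convex and `∂ₓU ≥ 0`.
The sup norm of `φ(t,·)` is Lipschitz in `t`, and by the envelope principle its derivative,
wherever it exists, is `sign φ · ∂ₜφ` at any maximum point; integrating over `[0, t]` gives the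
bound. As `∂ₓ²U` decays like `(1 + t)^(-9/8)`, the time integral is at most `8 C_U`.
-/

/-! ### Calculus preliminaries -/

lemma sign_mul_le_abs (a b : ℝ) : SignType.sign a * b ≤ |b| := by
  obtain ha | rfl | ha := lt_trichotomy a 0
  · simpa [sign_neg ha] using neg_le_abs b
  · simp
  · simpa [sign_pos ha] using le_abs_self b

lemma sign_mul_sub_nonneg_of_monotone {g : ℝ → ℝ} (hg : Monotone g) (x y : ℝ) :
    0 ≤ SignType.sign y * (g (x + y) - g x) := by
  obtain hy | rfl | hy := lt_trichotomy y 0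
  · simpa [sign_neg hy] using hg (by linarith : x + y ≤ x)
  · simp
  · simpa [sign_pos hy] using hg (by linarith : x ≤ x + y)

lemma deriv_deriv_nonpos_of_isLocalMax {h : ℝ → ℝ} {x : ℝ} (hmax : IsLocalMax h x)
    (hc : ContinuousAt h x) : deriv (deriv h) x ≤ 0 := by
  by_contra! hpos
  have hmin : IsLocalMin h x := isLocalMin_of_deriv_deriv_pos hpos hmax.deriv_eq_zero hc
  have hconst : h =ᶠ[nhds x] fun _ => h x := by
    filter_upwards [hmax, hmin] with y hle hge using le_antisymm hle hge
  simp [hconst.deriv.deriv_eq] at hpos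

lemma deriv_eq_zero_of_isLocalMax_abs {w : ℝ → ℝ} {x : ℝ} (hmax : IsLocalMax (|w ·|) x) :
    deriv w x = 0 := by
  obtain hx | hx := le_total 0 (w x)
  · refine IsLocalMax.deriv_eq_zero (hmax.mono fun y hy => ?_)
    exact (le_abs_self _).trans (hy.trans_eq (abs_of_nonneg hx))
  · refine IsLocalMin.deriv_eq_zero (hmax.mono fun y hy => ?_)
    exact neg_le_neg_iff.1 ((neg_le_abs _).trans (hy.trans_eq (abs_of_nonpos hx)))

lemma sign_mul_deriv_deriv_nonpos_of_isLocalMax_abs {w : ℝ → ℝ} {x : ℝ}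
    (hmax : IsLocalMax (|w ·|) x) (hc : ContinuousAt w x) :
    SignType.sign (w x) * deriv (deriv w) x ≤ 0 := by
  have hsmax : IsLocalMax (fun y => SignType.sign (w x) * w y) x := hmax.mono fun y hy =>
    (sign_mul_le_abs _ _).trans (hy.trans_eq (sign_mul_self _).symm)
  simpa only [deriv_const_mul_field'] using
    deriv_deriv_nonpos_of_isLocalMax hsmax (continuousAt_const.mul hc)

lemma deriv_comp_add_sub_comp {g a b : ℝ → ℝ} {x : ℝ} (hg : Differentiable ℝ g)
    (ha : DifferentiableAt ℝ a x) (hb : DifferentiableAt ℝ b x) :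
    deriv (fun y => g (a y + b y) - g (a y)) x
      = deriv g (a x + b x) * (deriv a x + deriv b x) - deriv g (a x) * deriv a x := by
  have hab : HasDerivAt (fun y => a y + b y) (deriv a x + deriv b x) x :=
    ha.hasDerivAt.add hb.hasDerivAt
  exact ((HasDerivAt.comp x (hg _).hasDerivAt hab).sub
    (HasDerivAt.comp x (hg _).hasDerivAt ha.hasDerivAt)).deriv

lemma contDiff_uncurry_deriv {𝕜 E F : Type*} [NontriviallyNormedField 𝕜]
    [NormedAddCommGroup E] [NormedSpace 𝕜 E] [NormedAddCommGroup F] [NormedSpace 𝕜 F]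
    {m n : WithTop ℕ∞} {u : E → 𝕜 → F} (hu : ContDiff 𝕜 n (Function.uncurry u))
    (hmn : m + 1 ≤ n) : ContDiff 𝕜 m (Function.uncurry fun t => deriv (u t)) :=
  ContDiff.fderiv_apply (f := fun q : E × 𝕜 => u q.1) (g := Prod.snd) (k := fun _ => 1)
    (hu.comp (contDiff_fst.fst.prodMk contDiff_snd)) contDiff_snd contDiff_const hmn

lemma intervalIntegrable_one_add_rpow (r : ℝ) {t : ℝ} (ht : 0 ≤ t) :
    IntervalIntegrable (fun τ : ℝ => (1 + τ) ^ r) volume 0 t := by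
  refine ContinuousOn.intervalIntegrable fun s hs => ?_
  rw [uIcc_of_le ht] at hs
  have hs0 : 1 + s ≠ 0 := by linarith [hs.1]
  exact ((continuousAt_const.add continuousAt_id).rpow_const (.inl hs0)).continuousWithinAt

lemma integral_one_add_rpow_le {r t : ℝ} (hr : r < -1) (ht : 0 ≤ t) :
    ∫ τ in (0 : ℝ)..t, (1 + τ) ^ r ≤ 1 / (-1 - r) := by
  have hzero : (0 : ℝ) ∉ uIcc (1 + 0) (1 + t) := by
    rw [uIcc_of_le (by linarith)]
    exact fun h => by linarith [h.1]
  rw [intervalIntegral.integral_comp_add_left (fun s => s ^ r), integral_rpow (.inr ⟨hr.ne, hzero⟩),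
    ← neg_div_neg_eq]
  have hpow : 0 ≤ (1 + t) ^ (r + 1) := by positivity
  have : 0 < -1 - r := by linarith
  rw [show -(r + 1) = -1 - r by ring, add_zero, Real.one_rpow]
  gcongr
  linarith

lemma L2norm_nonneg (g : ℝ → ℝ) : 0 ≤ L2norm g :=
  Real.rpow_nonneg (integral_nonneg fun _ => sq_nonneg _) _

/-! ### Evolution of a sup norm -/

lemma exists_forall_norm_le_of_tendsto_cocompact {X E : Type*} [TopologicalSpace X] [Nonempty X]
    [NormedAddCommGroup E] {w : X → E} (hw : Continuous w)
    (hlim : Tendsto w (cocompact X) (nhds 0)) : ∃ z, ∀ y, ‖w y‖ ≤ ‖w z‖ := by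
  by_cases hzero : ∀ y, w y = 0
  · exact ⟨Classical.arbitrary X, fun y => by simp [hzero]⟩
  · push Not at hzero
    obtain ⟨x₀, hx₀⟩ := hzero
    have hev : ∀ᶠ y in cocompact X, ‖w y‖ ≤ ‖w x₀‖ :=
      (hlim.norm.eventually_lt_const (by simpa using hx₀)).mono fun _ => le_of_lt
    exact hw.norm.exists_forall_ge' x₀ hev

lemma lipschitzOnWith_iSup {α ι : Type*} [PseudoMetricSpace α] [Nonempty ι] {v : α → ι → ℝ}
    {K : NNReal} {S : Set α} (hlip : ∀ i, LipschitzOnWith K (fun s => v s i) S)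
    (hbdd : ∀ s ∈ S, BddAbove (range (v s))) : LipschitzOnWith K (fun s => ⨆ i, v s i) S :=
  LipschitzOnWith.of_le_add_mul K fun s hs r hr => ciSup_le fun i =>
    ((hlip i).le_add_mul hs hr).trans (by gcongr; exact le_ciSup (hbdd r hr) i)

lemma intervalIntegrable_iSup {ι : Type*} [Nonempty ι] {v : ℝ → ι → ℝ} {a b B : ℝ}
    (hcont : ∀ i, ContinuousOn (fun s => v s i) (uIcc a b))
    (hB : ∀ s ∈ uIcc a b, ∀ i, |v s i| ≤ B) :
    IntervalIntegrable (fun s => ⨆ i, v s i) volume a b := by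
  have hbdd : ∀ s ∈ uIcc a b, BddAbove (range (v s)) := fun s hs =>
    ⟨B, forall_mem_range.2 fun i => (abs_le.1 (hB s hs i)).2⟩
  have hbound : ∀ s ∈ uIcc a b, ‖⨆ i, v s i‖ ≤ B := fun s hs => by
    have hi := Classical.arbitrary ι
    exact abs_le.2 ⟨(abs_le.1 (hB s hs hi)).1.trans (le_ciSup (hbdd s hs) hi),
      ciSup_le fun i => (abs_le.1 (hB s hs i)).2⟩
  have hlsc : LowerSemicontinuousOn (fun s => ⨆ i, v s i) (uIcc a b) :=
    lowerSemicontinuousOn_ciSup hbdd fun i => (hcont i).lowerSemicontinuousOn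
  have hmeas : AEMeasurable (fun s => ⨆ i, v s i) (volume.restrict (uIcc a b)) :=
    aemeasurable_restrict_of_measurable_subtype measurableSet_uIcc
      (lowerSemicontinuous_restrict_iff.2 hlsc).measurable
  refine IntegrableOn.intervalIntegrable ?_
  exact .of_bound isCompact_uIcc.measure_lt_top hmeas.aestronglyMeasurable B
    ((ae_restrict_iff' measurableSet_uIcc).2 (.of_forall hbound))

lemma le_add_integral_of_absolutelyContinuousOnInterval {N g : ℝ → ℝ} {a b : ℝ} (hab : a ≤ b)
    (hN : AbsolutelyContinuousOnInterval N a b) (hg : IntervalIntegrable g volume a b)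
    (hderiv : ∀ s ∈ Ioo a b, DifferentiableAt ℝ N s → deriv N s ≤ g s) :
    N b ≤ N a + ∫ s in a..b, g s := by
  have hae : ∀ᵐ s ∂volume.restrict (Icc a b), deriv N s ≤ g s := by
    rw [← restrict_Ioo_eq_restrict_Icc, ae_restrict_iff' measurableSet_Ioo]
    filter_upwards [hN.ae_differentiableAt] with s hdiff hs
    exact hderiv s hs (hdiff (Icc_subset_uIcc (Ioo_subset_Icc_self hs)))
  have hle := intervalIntegral.integral_mono_ae_restrict hab hN.intervalIntegrable_deriv hg hae
  rw [hN.integral_deriv_eq_sub] at hle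
  linarith

lemma deriv_iSup_abs_eq {X : Type*} {u : ℝ → X → ℝ} {s : ℝ} {z : X}
    (hbdd : ∀ᶠ r in nhds s, BddAbove (range fun y => |u r y|)) (hz : ∀ y, |u s y| ≤ |u s z|)
    (hN : DifferentiableAt ℝ (fun r => ⨆ y, |u r y|) s)
    (hu : DifferentiableAt ℝ (fun r => u r z) s) :
    deriv (fun r => ⨆ y, |u r y|) s = SignType.sign (u s z) * deriv (fun r => u r z) s := by
  have : Nonempty X := ⟨z⟩
  -- Envelope principle: the difference below is nonnegative near `s` and vanishes at `s`.
  have hmin : IsLocalMin (fun r => (⨆ y, |u r y|) - SignType.sign (u s z) * u r z) s := by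
    filter_upwards [hbdd] with r hr
    rw [sign_mul_self, sub_eq_zero.2 (le_antisymm (ciSup_le hz) (le_ciSup hbdd.self_of_nhds z))]
    exact sub_nonneg.2 ((sign_mul_le_abs _ _).trans (le_ciSup hr z))
  exact sub_eq_zero.1
    (hmin.hasDerivAt_eq_zero (hN.hasDerivAt.sub (hu.hasDerivAt.const_mul _)))

theorem iSup_abs_le_add_integral {X : Type*} [TopologicalSpace X] [Nonempty X] {u : ℝ → X → ℝ}
    {g : ℝ → ℝ} {a b : ℝ} {K : NNReal} (hab : a ≤ b)
    (hcont : ∀ s ∈ Icc a b, Continuous (u s))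
    (hlim : ∀ s ∈ Icc a b, Tendsto (u s) (cocompact X) (nhds 0))
    (hlip : ∀ x, LipschitzOnWith K (fun s => u s x) (Icc a b))
    (hdiff : ∀ x, ∀ s ∈ Ioo a b, DifferentiableAt ℝ (fun s => u s x) s)
    (hg : IntervalIntegrable g volume a b)
    (hmax : ∀ s ∈ Ioo a b, ∀ x, (∀ y, |u s y| ≤ |u s x|) →
      SignType.sign (u s x) * deriv (fun s => u s x) s ≤ g s) :
    ⨆ x, |u b x| ≤ (⨆ x, |u a x|) + ∫ s in a..b, g s := by
  have hattained : ∀ s ∈ Icc a b, ∃ z, ∀ y, |u s y| ≤ |u s z| := fun s hs =>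
    exists_forall_norm_le_of_tendsto_cocompact (hcont s hs) (hlim s hs)
  have hbdd : ∀ s ∈ Icc a b, BddAbove (range fun y => |u s y|) := fun s hs =>
    let ⟨z, hz⟩ := hattained s hs
    ⟨|u s z|, forall_mem_range.2 hz⟩
  have hlipN : LipschitzOnWith K (fun s => ⨆ x, |u s x|) (uIcc a b) := by
    rw [uIcc_of_le hab]
    refine lipschitzOnWith_iSup (fun x => ?_) hbdd
    simpa only [one_mul, Function.comp_def, Real.norm_eq_abs] using
      (lipschitzWith_one_norm (E := ℝ)).comp_lipschitzOnWith (hlip x)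
  refine le_add_integral_of_absolutelyContinuousOnInterval (N := fun s => ⨆ x, |u s x|) hab
    hlipN.absolutelyContinuousOnInterval hg fun s hs hN => ?_
  obtain ⟨z, hz⟩ := hattained s (Ioo_subset_Icc_self hs)
  have hbdd_near : ∀ᶠ r in nhds s, BddAbove (range fun y => |u r y|) :=
    mem_of_superset (Icc_mem_nhds hs.1 hs.2) hbdd
  exact (deriv_iSup_abs_eq hbdd_near hz hN (hdiff z s hs)).trans_le (hmax s hs z hz)

/-! ### The perturbation equation -/

/-- `φ` solves on `[0,T] × ℝ` the equation for the perturbation of the wave `U` by the viscous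
conservation law with flux `f` and viscosity `σ`. As `deriv` is `0` where the derivative does not
exist, this is the intended equation only for sufficiently smooth `f`, `σ`, `U` and `φ`. -/
def SolvesPerturbationEq (f σ : ℝ → ℝ) (U φ : ℝ → ℝ → ℝ) (T : ℝ) : Prop :=
  ∀ t ∈ Icc (0 : ℝ) T, ∀ x : ℝ,
    deriv (fun s => φ s x) t
      + deriv (fun y => f (U t y + φ t y) - f (U t y)) x
      - deriv (fun y => σ (deriv (U t) y + deriv (φ t) y) - σ (deriv (U t) y)) x
    = deriv (fun y => σ (deriv (U t) y)) x

/-- The spatial 2-jet `(u, ∂ₓu, ∂ₓ²u)` of `u` at `(t, x)`. As `ℝ × ℝ × ℝ` carries the sup norm,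
bounding its norm bounds the three components. -/
noncomputable def spatialJet (u : ℝ → ℝ → ℝ) (t x : ℝ) : ℝ × ℝ × ℝ :=
  (u t x, deriv (u t) x, deriv (deriv (u t)) x)

/-- The right-hand side of the perturbation equation solved for `∂ₜφ` and written in nondivergence
form, as a function of the spatial 2-jets `a` of `U` and `b` of `φ`. -/
noncomputable def perturbationRHS (f σ : ℝ → ℝ) (a b : ℝ × ℝ × ℝ) : ℝ :=
  deriv σ (a.2.1 + b.2.1) * (a.2.2 + b.2.2)
    - (deriv f (a.1 + b.1) * (a.2.1 + b.2.1) - deriv f a.1 * a.2.1)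

section PerturbationEquation

variable {f σ : ℝ → ℝ} {U φ : ℝ → ℝ → ℝ} {c T : ℝ}

lemma norm_spatialJet_le_iff {u : ℝ → ℝ → ℝ} {t x B : ℝ} :
    ‖spatialJet u t x‖ ≤ B ↔
      |u t x| ≤ B ∧ |deriv (u t) x| ≤ B ∧ |deriv (deriv (u t)) x| ≤ B := by
  simp only [spatialJet, norm_prod_le_iff, Real.norm_eq_abs]

lemma norm_spatialJet_le_add (u : ℝ → ℝ → ℝ) (t x : ℝ) :
    ‖spatialJet u t x‖ ≤ |u t x| + |deriv (u t) x| + |deriv (deriv (u t)) x| := by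
  refine norm_spatialJet_le_iff.2 ⟨?_, ?_, ?_⟩ <;>
    linarith [abs_nonneg (u t x), abs_nonneg (deriv (u t) x), abs_nonneg (deriv (deriv (u t)) x)]

lemma norm_spatialJet_le_of_decay {u : ℝ → ℝ → ℝ} {m M C r t x : ℝ} (ht : 0 ≤ t) (hr : r ≤ 0)
    (hu : m < u t x ∧ u t x < M) (hux : 0 < deriv (u t) x)
    (hux' : deriv (u t) x ≤ C * (1 + t)⁻¹)
    (huxx : |deriv (deriv (u t)) x| ≤ C * (1 + t) ^ r) :
    ‖spatialJet u t x‖ ≤ max (max |m| |M|) C := by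
  have ht' : 1 ≤ 1 + t := by linarith
  have hC : 0 ≤ C := nonneg_of_mul_nonneg_left (hux.le.trans hux') (by positivity)
  have hdecay : ∀ s : ℝ, s ≤ 1 → C * s ≤ max (max |m| |M|) C := fun s hs =>
    (mul_le_of_le_one_right hC hs).trans (le_max_right _ _)
  refine norm_spatialJet_le_iff.2 ⟨?_, ?_, ?_⟩
  · exact (abs_le_max_abs_abs hu.1.le hu.2.le).trans (le_max_left _ _)
  · exact (abs_of_pos hux).trans_le (hux'.trans (hdecay _ (inv_le_one_of_one_le₀ ht')))
  · exact huxx.trans (hdecay _ (Real.rpow_le_one_of_one_le_of_nonpos ht' hr))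

lemma continuous_perturbationRHS (hf : ContDiff ℝ 1 f) (hσ : ContDiff ℝ 1 σ) :
    Continuous (Function.uncurry (perturbationRHS f σ)) := by
  have : Continuous (deriv f) := hf.continuous_deriv le_rfl
  have : Continuous (deriv σ) := hσ.continuous_deriv le_rfl
  unfold Function.uncurry perturbationRHS
  fun_prop

lemma exists_abs_perturbationRHS_le (hf : ContDiff ℝ 1 f) (hσ : ContDiff ℝ 1 σ) (A B : ℝ) :
    ∃ K : NNReal, ∀ a b, ‖a‖ ≤ A → ‖b‖ ≤ B → |perturbationRHS f σ a b| ≤ K := by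
  obtain ⟨K, hK⟩ := ((isCompact_closedBall (0 : ℝ × ℝ × ℝ) A).prod
    (isCompact_closedBall (0 : ℝ × ℝ × ℝ) B)).exists_bound_of_continuousOn
    (continuous_perturbationRHS hf hσ).continuousOn
  refine ⟨K.toNNReal, fun a b ha hb => ?_⟩
  exact (hK (a, b) ⟨by simpa using ha, by simpa using hb⟩).trans (Real.le_coe_toNNReal K)

lemma sign_mul_perturbationRHS_le {a b : ℝ × ℝ × ℝ} (hf : Monotone (deriv f))
    (hσ : deriv σ a.2.1 ∈ Icc 0 c) (ha : 0 ≤ a.2.1) (hb₁ : b.2.1 = 0)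
    (hb₂ : SignType.sign b.1 * b.2.2 ≤ 0) :
    SignType.sign b.1 * perturbationRHS f σ a b ≤ c * |a.2.2| := by
  set ε : ℝ := (SignType.sign b.1 : ℝ)
  have hflux : 0 ≤ ε * (deriv f (a.1 + b.1) - deriv f a.1) * a.2.1 :=
    mul_nonneg (sign_mul_sub_nonneg_of_monotone hf a.1 b.1) ha
  have hvisc : deriv σ a.2.1 * (ε * b.2.2) ≤ 0 := mul_nonpos_of_nonneg_of_nonpos hσ.1 hb₂
  calc ε * perturbationRHS f σ a b
      = deriv σ a.2.1 * (ε * a.2.2) + deriv σ a.2.1 * (ε * b.2.2)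
        - ε * (deriv f (a.1 + b.1) - deriv f a.1) * a.2.1 := by
        rw [perturbationRHS, hb₁, add_zero]; ring
    _ ≤ deriv σ a.2.1 * (ε * a.2.2) := by linarith
    _ ≤ deriv σ a.2.1 * |a.2.2| := by gcongr; exacts [hσ.1, sign_mul_le_abs _ _]
    _ ≤ c * |a.2.2| := by gcongr; exact hσ.2

lemma deriv_time_eq_perturbationRHS (hf : Differentiable ℝ f) (hσ : Differentiable ℝ σ)
    (hU : ContDiff ℝ 2 (Function.uncurry U)) (hφ : ContDiff ℝ 2 (Function.uncurry φ))
    (hpde : SolvesPerturbationEq f σ U φ T) {t : ℝ} (ht : t ∈ Icc 0 T) (x : ℝ) :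
    deriv (fun s => φ s x) t = perturbationRHS f σ (spatialJet U t x) (spatialJet φ t x) := by
  have hslice {u : ℝ → ℝ → ℝ} (hu : ContDiff ℝ 1 (Function.uncurry u)) :
      DifferentiableAt ℝ (u t) x :=
    (hu.comp (contDiff_prodMk_right t)).differentiable one_ne_zero x
  have hUx := hslice (contDiff_uncurry_deriv hU one_add_one_eq_two.le)
  have hφx := hslice (contDiff_uncurry_deriv hφ one_add_one_eq_two.le)
  have hσU : deriv (fun y => σ (deriv (U t) y)) x
      = deriv σ (deriv (U t) x) * deriv (deriv (U t)) x :=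
    deriv_comp x (hσ _) hUx
  have heq := hpde t ht x
  rw [deriv_comp_add_sub_comp hf (hslice (hU.of_le one_le_two))
    (hslice (hφ.of_le one_le_two)), deriv_comp_add_sub_comp hσ hUx hφx, hσU] at heq
  simp only [perturbationRHS, spatialJet]
  linarith

lemma sign_mul_deriv_time_le_of_isLocalMax_abs
    (hf : Differentiable ℝ f) (hconv : ConvexOn ℝ univ f)
    (hσ : Differentiable ℝ σ) (hσ' : ∀ v, deriv σ v ∈ Icc 0 c)
    (hU : ContDiff ℝ 2 (Function.uncurry U)) (hφ : ContDiff ℝ 2 (Function.uncurry φ))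
    (hpde : SolvesPerturbationEq f σ U φ T) {t : ℝ} (ht : t ∈ Icc 0 T) {x : ℝ}
    (hUx : 0 ≤ deriv (U t) x) (hmax : IsLocalMax (|φ t ·|) x) :
    SignType.sign (φ t x) * deriv (fun s => φ s x) t ≤ c * |deriv (deriv (U t)) x| := by
  have hmono : Monotone (deriv f) :=
    monotoneOn_univ.1 (hconv.monotoneOn_deriv fun y _ => hf y)
  have hφc : Continuous (φ t) := hφ.continuous.comp (Continuous.prodMk_right t)
  rw [deriv_time_eq_perturbationRHS hf hσ hU hφ hpde ht x]
  exact sign_mul_perturbationRHS_le (a := spatialJet U t x) (b := spatialJet φ t x) hmono (hσ' _)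
    hUx (deriv_eq_zero_of_isLocalMax_abs hmax)
    (sign_mul_deriv_deriv_nonpos_of_isLocalMax_abs hmax hφc.continuousAt)

lemma exists_lipschitzOnWith_time_of_solvesPerturbationEq {A B : ℝ}
    (hf : ContDiff ℝ 1 f) (hσ : ContDiff ℝ 1 σ)
    (hU : ContDiff ℝ 2 (Function.uncurry U)) (hφ : ContDiff ℝ 2 (Function.uncurry φ))
    (hUA : ∀ t ∈ Icc 0 T, ∀ x, ‖spatialJet U t x‖ ≤ A)
    (hφB : ∀ t ∈ Icc 0 T, ∀ x, ‖spatialJet φ t x‖ ≤ B)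
    (hpde : SolvesPerturbationEq f σ U φ T) :
    ∃ K, ∀ x, LipschitzOnWith K (fun t => φ t x) (Icc 0 T) := by
  obtain ⟨K, hK⟩ := exists_abs_perturbationRHS_le hf hσ A B
  refine ⟨K, fun x => (convex_Icc 0 T).lipschitzOnWith_of_nnnorm_deriv_le (fun t _ => ?_)
    fun t ht => ?_⟩
  · exact (hφ.comp (contDiff_prodMk_left x)).differentiable two_ne_zero t
  · rw [deriv_time_eq_perturbationRHS (hf.differentiable one_ne_zero)
      (hσ.differentiable one_ne_zero) hU hφ hpde ht x]
    exact hK _ _ (hUA t ht x) (hφB t ht x)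

lemma intervalIntegrable_iSup_abs_deriv_deriv {A : ℝ} (hU : ContDiff ℝ 2 (Function.uncurry U))
    (hUA : ∀ t ∈ Icc 0 T, ∀ x, |deriv (deriv (U t)) x| ≤ A) {t : ℝ} (ht : t ∈ Icc 0 T) :
    IntervalIntegrable (fun τ => ⨆ y, |deriv (deriv (U τ)) y|) volume 0 t := by
  have hUxx : Continuous (Function.uncurry fun τ => deriv (deriv (U τ))) :=
    (contDiff_uncurry_deriv (m := 0)
      (contDiff_uncurry_deriv hU one_add_one_eq_two.le) (zero_add _).le).continuous
  refine intervalIntegrable_iSup (B := A)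
    (fun y => (hUxx.comp (Continuous.prodMk_left y)).abs.continuousOn) fun s hs y => ?_
  rw [uIcc_of_le ht.1] at hs
  exact (abs_abs _).trans_le (hUA s ⟨hs.1, hs.2.trans ht.2⟩ y)

theorem abs_le_iSup_abs_add_integral_of_solvesPerturbationEq {A B : ℝ}
    (hf : ContDiff ℝ 1 f) (hconv : ConvexOn ℝ univ f)
    (hσ : ContDiff ℝ 1 σ) (hσ' : ∀ v, deriv σ v ∈ Icc 0 c)
    (hU : ContDiff ℝ 2 (Function.uncurry U)) (hφ : ContDiff ℝ 2 (Function.uncurry φ))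
    (hUA : ∀ t ∈ Icc 0 T, ∀ x, ‖spatialJet U t x‖ ≤ A)
    (hUx : ∀ t ∈ Icc 0 T, ∀ x, 0 ≤ deriv (U t) x)
    (hφB : ∀ t ∈ Icc 0 T, ∀ x, ‖spatialJet φ t x‖ ≤ B)
    (hlim : ∀ t ∈ Icc 0 T, Tendsto (φ t) (cocompact ℝ) (nhds 0))
    (hpde : SolvesPerturbationEq f σ U φ T) {t : ℝ} (ht : t ∈ Icc 0 T) (x : ℝ) :
    |φ t x| ≤ (⨆ y, |φ 0 y|) + c * ∫ τ in (0 : ℝ)..t, ⨆ y, |deriv (deriv (U τ)) y| := by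
  have hsub : Icc 0 t ⊆ Icc 0 T := Icc_subset_Icc_right ht.2
  have hUxxA : ∀ s ∈ Icc 0 T, ∀ y, |deriv (deriv (U s)) y| ≤ A := fun s hs y =>
    (norm_spatialJet_le_iff.1 (hUA s hs y)).2.2
  have hle_iSup : ∀ s ∈ Icc 0 T, ∀ y,
      |deriv (deriv (U s)) y| ≤ ⨆ z, |deriv (deriv (U s)) z| := fun s hs =>
    le_ciSup ⟨A, forall_mem_range.2 (hUxxA s hs)⟩
  obtain ⟨K, hlip⟩ :=
    exists_lipschitzOnWith_time_of_solvesPerturbationEq hf hσ hU hφ hUA hφB hpde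
  have hsup : ⨆ y, |φ t y|
      ≤ (⨆ y, |φ 0 y|) + ∫ τ in (0 : ℝ)..t, c * ⨆ y, |deriv (deriv (U τ)) y| := by
    refine iSup_abs_le_add_integral ht.1
      (fun s _ => hφ.continuous.comp (Continuous.prodMk_right s)) (fun s hs => hlim s (hsub hs))
      (fun y => (hlip y).mono hsub)
      (fun y s _ => (hφ.comp (contDiff_prodMk_left y)).differentiable two_ne_zero s)
      ((intervalIntegrable_iSup_abs_deriv_deriv hU hUxxA ht).const_mul c) fun s hs y hy => ?_
    have hs' : s ∈ Icc 0 T := hsub (Ioo_subset_Icc_self hs)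
    refine (sign_mul_deriv_time_le_of_isLocalMax_abs (hf.differentiable one_ne_zero) hconv
      (hσ.differentiable one_ne_zero) hσ' hU hφ hpde hs' (hUx s hs' y) (.of_forall hy)).trans ?_
    exact mul_le_mul_of_nonneg_left (hle_iSup s hs' y) ((hσ' 0).1.trans (hσ' 0).2)
  rw [intervalIntegral.integral_const_mul] at hsup
  have hbdd : BddAbove (range fun y => |φ t y|) :=
    ⟨B, forall_mem_range.2 fun y => (norm_spatialJet_le_iff.1 (hφB t ht y)).1⟩
  exact (le_ciSup hbdd x).trans hsup

lemma integral_iSup_abs_deriv_deriv_le {C r t : ℝ} (hU : ContDiff ℝ 2 (Function.uncurry U))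
    (hr : r < -1) (ht : 0 ≤ t)
    (hdecay : ∀ τ ∈ Icc 0 t, ∀ x, |deriv (deriv (U τ)) x| ≤ C * (1 + τ) ^ r) :
    ∫ τ in (0 : ℝ)..t, ⨆ y, |deriv (deriv (U τ)) y| ≤ C / (-1 - r) := by
  have hC : 0 ≤ C := by simpa using (abs_nonneg _).trans (hdecay 0 ⟨le_rfl, ht⟩ 0)
  have hle : ∀ τ ∈ Icc 0 t, ∀ x, |deriv (deriv (U τ)) x| ≤ C := fun τ hτ x =>
    (hdecay τ hτ x).trans (mul_le_of_le_one_right hC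
      (Real.rpow_le_one_of_one_le_of_nonpos (by linarith [hτ.1]) (by linarith)))
  calc ∫ τ in (0 : ℝ)..t, ⨆ y, |deriv (deriv (U τ)) y|
      ≤ ∫ τ in (0 : ℝ)..t, C * (1 + τ) ^ r :=
        intervalIntegral.integral_mono_on ht
          (intervalIntegrable_iSup_abs_deriv_deriv hU hle ⟨ht, le_rfl⟩)
          ((intervalIntegrable_one_add_rpow r ht).const_mul C) fun τ hτ => ciSup_le (hdecay τ hτ)
    _ = C * ∫ τ in (0 : ℝ)..t, (1 + τ) ^ r := intervalIntegral.integral_const_mul _ _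
    _ ≤ C * (1 / (-1 - r)) := by gcongr; exact integral_one_add_rpow_le hr ht
    _ = C / (-1 - r) := mul_one_div _ _

lemma mem_Icc_of_pseudoplastic_bounds {p c₁ c₂ v d : ℝ} (hp : p ≤ 1) (hc₁ : 0 ≤ c₁)
    (hc₁₂ : c₁ ≤ c₂) (hd : c₁ * (1 + v ^ 2) ^ ((p - 1) / 2) ≤ d ∧
      d ≤ c₂ * (1 + v ^ 2) ^ ((p - 1) / 2)) : d ∈ Icc 0 c₂ := by
  have hpow : (1 + v ^ 2) ^ ((p - 1) / 2) ≤ 1 :=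
    Real.rpow_le_one_of_one_le_of_nonpos (by nlinarith [sq_nonneg v]) (by linarith)
  have hlow : 0 ≤ c₁ * (1 + v ^ 2) ^ ((p - 1) / 2) := by positivity
  exact ⟨hlow.trans hd.1,
    hd.2.trans (mul_le_of_le_one_right (hc₁.trans hc₁₂) hpow)⟩

theorem perturbation_Linfty_bound_general {A B : ℝ}
    (hf : ContDiff ℝ 1 f) (hconv : ConvexOn ℝ univ f)
    (hσ : ContDiff ℝ 1 σ) (hσ' : ∀ v, deriv σ v ∈ Icc 0 c)
    (hU : ContDiff ℝ 2 (Function.uncurry U)) (hφ : ContDiff ℝ 2 (Function.uncurry φ))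
    (hUA : ∀ t ∈ Icc 0 T, ∀ x, ‖spatialJet U t x‖ ≤ A)
    (hUx : ∀ t ∈ Icc 0 T, ∀ x, 0 ≤ deriv (U t) x)
    (hφB : ∀ t ∈ Icc 0 T, ∀ x, ‖spatialJet φ t x‖ ≤ B)
    (hlim : ∀ t ∈ Icc 0 T, Tendsto (φ t) (cocompact ℝ) (nhds 0))
    (hpde : SolvesPerturbationEq f σ U φ T) :
    (∀ t ∈ Icc 0 T, ∀ x,
      |φ t x| ≤ (⨆ y, |φ 0 y|) + c * ∫ τ in (0 : ℝ)..t, ⨆ y, |deriv (deriv (U τ)) y|) ∧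
    ∀ C r : ℝ, r < -1 →
      (∀ t ∈ Icc 0 T, ∀ x, |deriv (deriv (U t)) x| ≤ C * (1 + t) ^ r) →
      ∀ t ∈ Icc 0 T, ∀ x, |φ t x| ≤ (⨆ y, |φ 0 y|) + c * (C / (-1 - r)) := by
  have hbound : ∀ t ∈ Icc 0 T, ∀ x,
      |φ t x| ≤ (⨆ y, |φ 0 y|) + c * ∫ τ in (0 : ℝ)..t, ⨆ y, |deriv (deriv (U τ)) y| :=
    fun _ ht x => abs_le_iSup_abs_add_integral_of_solvesPerturbationEq hf hconv hσ hσ' hU hφ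
      hUA hUx hφB hlim hpde ht x
  refine ⟨hbound, fun C r hr hdecay t ht x => (hbound t ht x).trans ?_⟩
  have hint := integral_iSup_abs_deriv_deriv_le hU hr ht.1
    fun τ hτ => hdecay τ ⟨hτ.1, hτ.2.trans ht.2⟩
  have hc : 0 ≤ c := (hσ' 0).1.trans (hσ' 0).2
  gcongr

end PerturbationEquation

/-- Lemma 4.1 (uniform `L^∞` bound on the perturbation): in the setting of the Cauchy
problem for the scalar conservation law with pseudo-plastic viscosity (`0 < p < 1`),
strictly convex flux `f`, smoothed rarefaction wave `U`, and a smooth decaying solution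
`φ` of the perturbation equation on `[0,T]×ℝ`, one has for all `t ∈ [0,T]` and `x`:
`|φ(t,x)| ≤ sup|φ(0,·)| + c₂·∫₀^t sup_x|∂ₓ²U(τ,·)| dτ ≤ sup|φ(0,·)| + 8 c₂ C_U`. -/
theorem perturbation_Linfty_bound
    (p c₁ c₂ : ℝ) (hp0 : 0 < p) (hp1 : p < 1) (hc1 : 0 < c₁) (hc12 : c₁ ≤ c₂)
    (f : ℝ → ℝ) (hf : ContDiff ℝ (⊤ : ℕ∞) f) (hconv : ∀ u : ℝ, 0 < deriv (deriv f) u)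
    (σ : ℝ → ℝ) (hσs : ContDiff ℝ (⊤ : ℕ∞) σ) (hσ0 : σ 0 = 0)
    (hσ' : ∀ v : ℝ, c₁ * (1 + v ^ 2) ^ ((p - 1) / 2) ≤ deriv σ v ∧
      deriv σ v ≤ c₂ * (1 + v ^ 2) ^ ((p - 1) / 2))
    (um up CU : ℝ) (hu : um < up) (hCU : 0 < CU)
    (U : ℝ → ℝ → ℝ) (hUs : ContDiff ℝ (⊤ : ℕ∞) (fun q : ℝ × ℝ => U q.1 q.2))
    (hUpde : ∀ t : ℝ, 0 ≤ t → ∀ x,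
      deriv (fun s => U s x) t + deriv (fun y => f (U t y)) x = 0)
    (hUrange : ∀ t : ℝ, 0 ≤ t → ∀ x, um < U t x ∧ U t x < up)
    (hUx : ∀ t : ℝ, 0 ≤ t → ∀ x, 0 < deriv (U t) x)
    (hU1 : ∀ t : ℝ, 0 ≤ t → ∀ x, deriv (U t) x ≤ CU * (1 + t)⁻¹)
    (hU2 : ∀ t : ℝ, 0 ≤ t → L2norm (deriv (U t)) ≤ CU * (1 + t) ^ (-(1 : ℝ) / 2))
    (hU3 : ∀ t : ℝ, 0 ≤ t → (∫ x : ℝ, |deriv (deriv (U t)) x|) ≤ CU * (1 + t)⁻¹)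
    (hU4 : ∀ t : ℝ, 0 ≤ t → ∀ x,
      L2norm (deriv (deriv (U t))) + |deriv (deriv (U t)) x| ≤ CU * (1 + t) ^ (-(9 : ℝ) / 8))
    (hU5 : ∀ t : ℝ, 0 ≤ t →
      L2norm (deriv (deriv (deriv (U t)))) ≤ CU * (1 + t) ^ (-(9 : ℝ) / 8))
    (hU6 : ∀ t : ℝ, 0 ≤ t → ∀ x,
      L2norm (fun y => deriv (fun s => deriv (U s) y) t)
        + |deriv (fun s => deriv (U s) x) t| ≤ CU * (1 + t)⁻¹)
    (T : ℝ) (hT : 0 < T)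
    (φ : ℝ → ℝ → ℝ) (hφs : ContDiff ℝ (⊤ : ℕ∞) (fun q : ℝ × ℝ => φ q.1 q.2))
    (hpde : ∀ t ∈ Icc (0 : ℝ) T, ∀ x : ℝ,
      deriv (fun s => φ s x) t
        + deriv (fun y => f (U t y + φ t y) - f (U t y)) x
        - deriv (fun y => σ (deriv (U t) y + deriv (φ t) y) - σ (deriv (U t) y)) x
      = deriv (fun y => σ (deriv (U t) y)) x)
    (hbdd : ∃ B : ℝ, ∀ t ∈ Icc (0 : ℝ) T, ∀ x : ℝ,
      |φ t x| + |deriv (φ t) x| + |deriv (deriv (φ t)) x|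
        + |deriv (deriv (deriv (φ t))) x| + |deriv (fun s => deriv (φ s) x) t| ≤ B)
    (hint : ∀ t ∈ Icc (0 : ℝ) T,
      Integrable (fun x : ℝ => (φ t x) ^ 2) ∧
      Integrable (fun x : ℝ => (deriv (φ t) x) ^ 2) ∧
      Integrable (fun x : ℝ => (deriv (deriv (φ t)) x) ^ 2) ∧
      Integrable (fun x : ℝ => (deriv (deriv (deriv (φ t))) x) ^ 2) ∧
      Integrable (fun x : ℝ => (deriv (fun s => deriv (φ s) x) t) ^ 2))
    (hintu : ∃ B : ℝ, ∀ t ∈ Icc (0 : ℝ) T,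
      (∫ x : ℝ, (φ t x) ^ 2) + (∫ x : ℝ, (deriv (φ t) x) ^ 2)
        + (∫ x : ℝ, (deriv (deriv (φ t)) x) ^ 2)
        + (∫ x : ℝ, (deriv (deriv (deriv (φ t))) x) ^ 2)
        + (∫ x : ℝ, (deriv (fun s => deriv (φ s) x) t) ^ 2) ≤ B)
    (hlim : ∀ t ∈ Icc (0 : ℝ) T,
      Tendsto (φ t) atTop (nhds 0) ∧ Tendsto (φ t) atBot (nhds 0) ∧
      Tendsto (deriv (φ t)) atTop (nhds 0) ∧ Tendsto (deriv (φ t)) atBot (nhds 0) ∧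
      Tendsto (deriv (deriv (φ t))) atTop (nhds 0) ∧
      Tendsto (deriv (deriv (φ t))) atBot (nhds 0)) :
    (∀ t ∈ Icc (0 : ℝ) T, ∀ x : ℝ,
      |φ t x| ≤ (⨆ y : ℝ, |φ 0 y|)
        + c₂ * ∫ τ in (0:ℝ)..t, ⨆ y : ℝ, |deriv (deriv (U τ)) y|) ∧
    (∀ t ∈ Icc (0 : ℝ) T, ∀ x : ℝ,
      |φ t x| ≤ (⨆ y : ℝ, |φ 0 y|) + 8 * c₂ * CU) := by
  obtain ⟨B, hB⟩ := hbdd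
  have hUxx : ∀ t : ℝ, 0 ≤ t → ∀ x, |deriv (deriv (U t)) x| ≤ CU * (1 + t) ^ (-(9 : ℝ) / 8) :=
    fun t ht x => (le_add_of_nonneg_left (L2norm_nonneg _)).trans (hU4 t ht x)
  have hφB : ∀ t ∈ Icc 0 T, ∀ x, ‖spatialJet φ t x‖ ≤ B := fun t ht x => by
    linarith [hB t ht x, norm_spatialJet_le_add φ t x, abs_nonneg (deriv (deriv (deriv (φ t))) x),
      abs_nonneg (deriv (fun s => deriv (φ s) x) t)]
  obtain ⟨hbound, hdecay⟩ := perturbation_Linfty_bound_general (contDiff_infty.1 hf 1)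
    ((strictMono_of_deriv_pos hconv).monotone.convexOn_univ_of_deriv
      (hf.differentiable (by simp)))
    (contDiff_infty.1 hσs 1)
    (fun v => mem_Icc_of_pseudoplastic_bounds hp1.le hc1.le hc12 (hσ' v))
    (contDiff_infty.1 hUs 2) (contDiff_infty.1 hφs 2)
    (fun t ht x => norm_spatialJet_le_of_decay ht.1 (by norm_num) (hUrange t ht.1 x)
      (hUx t ht.1 x) (hU1 t ht.1 x) (hUxx t ht.1 x))
    (fun t ht x => (hUx t ht.1 x).le) hφB
    (fun t ht => by
      rw [cocompact_eq_atBot_atTop]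
      exact (hlim t ht).2.1.sup (hlim t ht).1)
    hpde
  refine ⟨hbound, fun t ht x => ?_⟩
  convert hdecay CU _ (by norm_num) (fun s hs => hUxx s hs.1) t ht x using 2
  ring
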